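/- arXiv:2407.09830 — 2 statements merged into one kernel-verified Lean document; each statement's English description precedes it below -/
import Mathlib

section
/- Let a∈ℝ\{0}, b>0, n∈ℕ, α≥0 with n>α+1. Then for every f∈C_α^n([b,∞)) the limit I_{a,b}(f) := lim_{ε→0⁺} ∫_b^∞ e^{−ε(y−y₀)²} e^{iay²} f(y) dy exists and its value is independent of y₀∈ℝ. Moreover, there exists a constant D_{a,b,n,α}≥0, depending continuously on a and b and satisfying D_{a,b,n,α} = O(1/|a|) as |a|→∞, such that for every 0<ε≤1 and y₀∈ℝ one has |I_{a,b}^{ε,y₀}(f)| ≤ D_{a,b,n,α}·‖f‖_{C_α^n([b,∞))} and |I_{a,b}(f)| ≤ D_{a,b,n,α}·‖f‖_{C_α^n([b,∞))}. -/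
open Set Filter MeasureTheory Topology

noncomputable section

/-- Membership in the space `C_α^n([b,∞))`: `f` is `n`-times continuously differentiable
on `[b,∞)` and its `n`-th derivative satisfies a polynomial bound `M·y^α`. -/
def MemCnAlpha (b : ℝ) (n : ℕ) (α : ℝ) (f : ℝ → ℂ) : Prop :=
  ContDiffOn ℝ n f (Set.Ici b) ∧
    ∃ M : ℝ, 0 ≤ M ∧ ∀ y ∈ Set.Ici b, ‖iteratedDerivWithin n f (Set.Ici b) y‖ ≤ M * y ^ α

/-- The norm on the space `C_α^n([b,∞))`. -/
def CnAlphaNorm (b : ℝ) (n : ℕ) (α : ℝ) (f : ℝ → ℂ) : ℝ :=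
  (∑ k ∈ Finset.range n, ‖iteratedDerivWithin k f (Set.Ici b) b‖ / b ^ ((n : ℝ) - k + α)) +
    ⨆ y : Set.Ici b, ‖iteratedDerivWithin n f (Set.Ici b) y‖ / (y : ℝ) ^ α


/-- The regularized integral `I_{a,b}^{ε,y₀}(f) = ∫_b^∞ e^{-ε(y-y₀)²} e^{iay²} f(y) dy`. -/
def Iab (a b ε y₀ : ℝ) (f : ℝ → ℂ) : ℂ :=
  ∫ y in Set.Ioi b,
    Complex.exp (-(ε : ℂ) * (y - y₀) ^ 2) * Complex.exp (Complex.I * a * y ^ 2) * f y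


theorem mem_bdd {b : ℝ} {n : ℕ} {α : ℝ} {f : ℝ → ℂ} (hb : 0 < b) (hf : MemCnAlpha b n α f) :
    BddAbove (Set.range fun y : Set.Ici b =>
      ‖iteratedDerivWithin n f (Set.Ici b) y‖ / (y : ℝ) ^ α) := by
  obtain ⟨_, M, hM, h⟩ := hf
  refine ⟨M, ?_⟩
  rintro _ ⟨⟨y, hy⟩, rfl⟩
  have hy0 : 0 < y := lt_of_lt_of_le hb hy
  simp only
  rw [div_le_iff₀ (Real.rpow_pos_of_pos hy0 α)]
  exact h y hy

theorem sup_nonneg' {b : ℝ} {n : ℕ} {α : ℝ} {f : ℝ → ℂ} (hb : 0 < b) :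
    0 ≤ ⨆ y : Set.Ici b, ‖iteratedDerivWithin n f (Set.Ici b) y‖ / (y : ℝ) ^ α := by
  refine Real.iSup_nonneg ?_
  rintro ⟨y, hy⟩
  have hy0 : 0 < y := lt_of_lt_of_le hb hy
  positivity

theorem norm_nn {b : ℝ} {n : ℕ} {α : ℝ} {f : ℝ → ℂ} (hb : 0 < b) :
    0 ≤ CnAlphaNorm b n α f := by
  unfold CnAlphaNorm
  have := sup_nonneg' (n := n) (α := α) (f := f) hb
  positivity

theorem hasDer {b : ℝ} {n : ℕ} {f : ℝ → ℂ} (hf : ContDiffOn ℝ n f (Set.Ici b)) {k : ℕ}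
    (hk : k < n) {y : ℝ} (hy : y ∈ Set.Ici b) :
    HasDerivWithinAt (iteratedDerivWithin k f (Set.Ici b))
      (iteratedDerivWithin (k + 1) f (Set.Ici b) y) (Set.Ici b) y := by
  rw [iteratedDerivWithin_succ]
  exact (hf.differentiableOn_iteratedDerivWithin (by exact_mod_cast hk)
    (uniqueDiffOn_Ici b) y hy).hasDerivWithinAt

theorem growth {b : ℝ} {n : ℕ} {α : ℝ} {f : ℝ → ℂ} (hα : 0 ≤ α) (hb : 0 < b)
    (hf : MemCnAlpha b n α f) (j : ℕ) : ∀ k : ℕ, k + j = n → ∀ y ∈ Set.Ici b,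
    ‖iteratedDerivWithin k f (Set.Ici b) y‖ ≤
      ((j : ℝ) + 1) * CnAlphaNorm b n α f * y ^ ((j : ℝ) + α) := by
  induction j with
  | zero =>
    intro k hk y hy
    obtain rfl : k = n := by omega
    have hy0 : 0 < y := lt_of_lt_of_le hb hy
    have h1 := le_ciSup (mem_bdd hb hf) ⟨y, hy⟩
    have h2 : ‖iteratedDerivWithin k f (Set.Ici b) y‖ / y ^ α ≤ CnAlphaNorm b k α f := by
      refine le_trans h1 ?_
      unfold CnAlphaNorm
      have : 0 ≤ ∑ i ∈ Finset.range k,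
        ‖iteratedDerivWithin i f (Set.Ici b) b‖ / b ^ ((k : ℝ) - i + α) := by positivity
      linarith
    rw [div_le_iff₀ (Real.rpow_pos_of_pos hy0 α)] at h2
    simpa using h2
  | succ j ih =>
    intro k hk y hy
    have hy0 : 0 < y := lt_of_lt_of_le hb hy
    have hN := norm_nn (n := n) (α := α) (f := f) hb
    have hby : b ≤ y := hy
    have hB : ‖iteratedDerivWithin k f (Set.Ici b) b‖ ≤
        CnAlphaNorm b n α f * b ^ (((j + 1 : ℕ) : ℝ) + α) := by
      rw [← div_le_iff₀ (Real.rpow_pos_of_pos hb _)]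
      have h1 := Finset.single_le_sum (s := Finset.range n)
        (f := fun i : ℕ => ‖iteratedDerivWithin i f (Set.Ici b) b‖ / b ^ ((n : ℝ) - i + α))
        (fun i _ => by positivity) (Finset.mem_range.2 (by omega : k < n))
      have h3 : (n : ℝ) - k = ((j + 1 : ℕ) : ℝ) := by
        rw [← hk]; push_cast; ring
      simp only [h3] at h1
      have := sup_nonneg' (n := n) (α := α) (f := f) hb
      unfold CnAlphaNorm
      linarith
    have hmv := (convex_Icc b y).norm_image_sub_le_of_norm_hasDerivWithin_le
      (f := iteratedDerivWithin k f (Set.Ici b))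
      (f' := iteratedDerivWithin (k + 1) f (Set.Ici b))
      (C := ((j : ℝ) + 1) * CnAlphaNorm b n α f * y ^ ((j : ℝ) + α))
      (fun x hx => (hasDer hf.1 (by omega) hx.1).mono Set.Icc_subset_Ici_self)
      (fun x hx => by
        refine (ih (k + 1) (by omega) x hx.1).trans ?_
        have hx0 : 0 ≤ x := hb.le.trans hx.1
        have := hx.2
        gcongr)
      (Set.left_mem_Icc.2 hby) (Set.right_mem_Icc.2 hby)
    have h4 : ‖iteratedDerivWithin k f (Set.Ici b) y‖ ≤ ‖iteratedDerivWithin k f (Set.Ici b) b‖ +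
        ‖iteratedDerivWithin k f (Set.Ici b) y - iteratedDerivWithin k f (Set.Ici b) b‖ := by
      have := norm_add_le (iteratedDerivWithin k f (Set.Ici b) b)
        (iteratedDerivWithin k f (Set.Ici b) y - iteratedDerivWithin k f (Set.Ici b) b)
      simpa using this
    have h5 : b ^ (((j + 1 : ℕ) : ℝ) + α) ≤ y ^ (((j + 1 : ℕ) : ℝ) + α) :=
      Real.rpow_le_rpow hb.le hby (by positivity)
    have h6 : y ^ ((j : ℝ) + α) * ‖y - b‖ ≤ y ^ (((j + 1 : ℕ) : ℝ) + α) := by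
      have : y ^ (((j + 1 : ℕ) : ℝ) + α) = y ^ ((j : ℝ) + α) * y := by
        rw [← Real.rpow_add_one hy0.ne']; congr 1; push_cast; ring
      rw [this, Real.norm_of_nonneg (by linarith)]
      gcongr
      linarith
    have h7 := mul_le_mul_of_nonneg_left h5 hN
    have h8 := mul_le_mul_of_nonneg_left h6 (by positivity : 0 ≤ ((j : ℝ) + 1) * CnAlphaNorm b n α f)
    push_cast at *
    nlinarith

def ph (a ε y₀ y : ℝ) : ℂ := -2 * (ε : ℂ) * (y - y₀) + 2 * Complex.I * a * y

theorem ph_lower (a ε y₀ y : ℝ) : 2 * |a| * |y| ≤ ‖ph a ε y₀ y‖ := by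
  have h := Complex.abs_im_le_norm (ph a ε y₀ y)
  have : (ph a ε y₀ y).im = 2 * a * y := by simp [ph]
  rw [this, abs_mul, abs_mul] at h
  simpa using h

theorem ph_ne {a ε y₀ y : ℝ} (ha : a ≠ 0) (hy : 0 < y) : ph a ε y₀ y ≠ 0 := by
  have := ph_lower a ε y₀ y
  have h2 : 0 < 2 * |a| * |y| := by positivity
  exact norm_pos_iff.1 (h2.trans_le this)

def GG (a b ε y₀ : ℝ) (f : ℝ → ℂ) (m k : ℕ) (y : ℝ) : ℂ :=
  Complex.exp (-(ε : ℂ) * (y - y₀) ^ 2) * Complex.exp (Complex.I * a * y ^ 2) *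
    iteratedDerivWithin k f (Set.Ici b) y / ph a ε y₀ y ^ m

theorem exp_norm (a ε y₀ y : ℝ) :
    ‖Complex.exp (-(ε : ℂ) * (y - y₀) ^ 2) * Complex.exp (Complex.I * a * y ^ 2)‖ =
      Real.exp (-ε * (y - y₀) ^ 2) := by
  rw [norm_mul, Complex.norm_exp, Complex.norm_exp]
  have h1 : (-(ε : ℂ) * (y - y₀) ^ 2).re = -ε * (y - y₀) ^ 2 := by
    have : (-(ε : ℂ) * (y - y₀) ^ 2) = ((-ε * (y - y₀) ^ 2 : ℝ) : ℂ) := by push_cast; ring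
    rw [this, Complex.ofReal_re]
  have h2 : (Complex.I * a * y ^ 2).re = 0 := by
    have : (Complex.I * a * y ^ 2) = ((a * y ^ 2 : ℝ) : ℂ) * Complex.I := by push_cast; ring
    rw [this, Complex.re_ofReal_mul]; simp
  rw [h1, h2]; simp

theorem GG_bound {a b ε y₀ : ℝ} {n : ℕ} {α : ℝ} {f : ℝ → ℂ} (hα : 0 ≤ α) (ha : a ≠ 0) (hb : 0 < b)
    (hf : MemCnAlpha b n α f) (m k j : ℕ) (hkj : k + j = n) {y : ℝ} (hy : b ≤ y) :
    ‖GG a b ε y₀ f m k y‖ ≤ Real.exp (-ε * (y - y₀) ^ 2) *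
      (((j : ℝ) + 1) * CnAlphaNorm b n α f * y ^ ((j : ℝ) + α)) / (2 * |a| * y) ^ m := by
  have hy0 : 0 < y := hb.trans_le hy
  have hN := norm_nn (n := n) (α := α) (f := f) hb
  unfold GG
  rw [norm_div, norm_mul, exp_norm, norm_pow]
  have h1 := growth hα hb hf j k hkj y hy
  have h2 := ph_lower a ε y₀ y
  rw [abs_of_pos hy0] at h2
  have : 0 < 2 * |a| * y := by positivity
  gcongr

theorem GG_bound0 {a b ε y₀ : ℝ} {n : ℕ} {α : ℝ} {f : ℝ → ℂ} (hα : 0 ≤ α) (ha : a ≠ 0) (hb : 0 < b)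
    (hε : 0 ≤ ε)
    (hf : MemCnAlpha b n α f) (m k j : ℕ) (hkj : k + j = n) {y : ℝ} (hy : b ≤ y) :
    ‖GG a b ε y₀ f m k y‖ ≤
      ((j : ℝ) + 1) / (2 * |a|) ^ m * CnAlphaNorm b n α f * y ^ ((j : ℝ) + α - m) := by
  have hy0 : 0 < y := hb.trans_le hy
  have hN := norm_nn (n := n) (α := α) (f := f) hb
  refine (GG_bound hα ha hb hf m k j hkj hy).trans ?_
  have he : Real.exp (-ε * (y - y₀) ^ 2) ≤ 1 := by
    rw [Real.exp_le_one_iff]; nlinarith [mul_nonneg hε (sq_nonneg (y - y₀))]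
  have h1 : Real.exp (-ε * (y - y₀) ^ 2) *
      (((j : ℝ) + 1) * CnAlphaNorm b n α f * y ^ ((j : ℝ) + α)) / (2 * |a| * y) ^ m ≤
      1 * (((j : ℝ) + 1) * CnAlphaNorm b n α f * y ^ ((j : ℝ) + α)) / (2 * |a| * y) ^ m := by
    gcongr
  refine h1.trans (le_of_eq ?_)
  rw [Real.rpow_sub hy0, Real.rpow_natCast, mul_pow]
  have : |a| ≠ 0 := by positivity
  field_simp

theorem GG_contOn {a b ε y₀ : ℝ} {n : ℕ} {f : ℝ → ℂ} (ha : a ≠ 0) (hb : 0 < b)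
    (hf : ContDiffOn ℝ n f (Set.Ici b)) (m k : ℕ) (hk : k ≤ n) :
    ContinuousOn (GG a b ε y₀ f m k) (Set.Ici b) := by
  have h1 := hf.continuousOn_iteratedDerivWithin (m := k) (by exact_mod_cast hk)
    (uniqueDiffOn_Ici b)
  unfold GG
  refine ContinuousOn.div (ContinuousOn.mul (by fun_prop) h1) ?_ ?_
  · unfold ph; fun_prop
  · intro y hy
    exact pow_ne_zero _ (ph_ne ha (hb.trans_le hy))

theorem GG_meas {a b ε y₀ : ℝ} {n : ℕ} {f : ℝ → ℂ} (ha : a ≠ 0) (hb : 0 < b)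
    (hf : ContDiffOn ℝ n f (Set.Ici b)) (m k : ℕ) (hk : k ≤ n) :
    AEStronglyMeasurable (GG a b ε y₀ f m k) (volume.restrict (Set.Ioi b)) :=
  ((GG_contOn ha hb hf m k hk).mono Set.Ioi_subset_Ici_self).aestronglyMeasurable
    measurableSet_Ioi

theorem GG_int {a b ε y₀ : ℝ} {n : ℕ} {α : ℝ} {f : ℝ → ℂ} (hα : 0 ≤ α) (ha : a ≠ 0) (hb : 0 < b)
    (hε : 0 < ε) (hf : MemCnAlpha b n α f) (m k : ℕ) (hk : k ≤ n) :
    IntegrableOn (GG a b ε y₀ f m k) (Set.Ioi b) := by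
  obtain ⟨j, hkj⟩ := Nat.exists_eq_add_of_le hk
  have hN := norm_nn (n := n) (α := α) (f := f) hb
  have h0 := (integrableOn_rpow_mul_exp_neg_mul_sq (b := ε / 2) (by positivity)
    (s := (j : ℝ) + α) (by have : (0:ℝ) ≤ j := by positivity
                           linarith)).mono_set (Set.Ioi_subset_Ioi hb.le)
  have h1 := h0.const_mul (Real.exp (ε * y₀ ^ 2) * (((j : ℝ) + 1) * CnAlphaNorm b n α f)
    / (2 * |a| * b) ^ m)
  refine h1.mono' (GG_meas ha hb hf.1 m k hk) ?_
  refine (ae_restrict_iff' measurableSet_Ioi).2 (Eventually.of_forall fun y hy => ?_)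
  have hy' : b ≤ y := le_of_lt hy
  have hy0 : 0 < y := hb.trans_le hy'
  refine (GG_bound hα ha hb hf m k j hkj.symm hy').trans ?_
  have he : Real.exp (-ε * (y - y₀) ^ 2) ≤
      Real.exp (ε * y₀ ^ 2) * Real.exp (-(ε / 2) * y ^ 2) := by
    rw [← Real.exp_add, Real.exp_le_exp]
    nlinarith [mul_nonneg hε.le (sq_nonneg (y - 2 * y₀))]
  have : 0 < 2 * |a| * b := by positivity
  calc _ ≤ (Real.exp (ε * y₀ ^ 2) * Real.exp (-(ε / 2) * y ^ 2)) *
      (((j : ℝ) + 1) * CnAlphaNorm b n α f * y ^ ((j : ℝ) + α)) / (2 * |a| * b) ^ m := by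
        gcongr
    _ = _ := by ring

theorem GG_deriv {a b ε y₀ : ℝ} {n : ℕ} {f : ℝ → ℂ} (ha : a ≠ 0) (hb : 0 < b)
    (hf : ContDiffOn ℝ n f (Set.Ici b)) (m k : ℕ) (hk : k < n) {y : ℝ} (hy : b < y) :
    HasDerivAt (GG a b ε y₀ f (m + 1) k)
      (GG a b ε y₀ f m k y + GG a b ε y₀ f (m + 1) (k + 1) y
        - ((m : ℂ) + 1) * (-2 * (ε : ℂ) + 2 * Complex.I * a) * GG a b ε y₀ f (m + 2) k y) y := by
  have hne := ph_ne (ε := ε) (y₀ := y₀) ha (hb.trans hy)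
  have hD := (hasDer hf hk (le_of_lt hy : b ≤ y)).hasDerivAt (Ici_mem_nhds hy)
  have hid : HasDerivAt (fun y : ℝ => (y : ℂ)) 1 y := Complex.ofRealCLM.hasDerivAt
  have hp : HasDerivAt (fun y : ℝ => ph a ε y₀ y) (-2 * (ε : ℂ) + 2 * Complex.I * a) y := by
    unfold ph
    have := ((hid.sub_const (y₀ : ℂ)).const_mul (-2 * (ε : ℂ))).add
      (hid.const_mul (2 * Complex.I * a))
    refine this.congr_deriv ?_
    ring
  have he1 := (((hid.sub_const (y₀ : ℂ)).pow 2).const_mul (-(ε : ℂ))).cexp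
  have he2 := ((hid.pow 2).const_mul (Complex.I * a)).cexp
  have := ((he1.mul he2).mul hD).div (hp.pow (m + 1)) (pow_ne_zero _ hne)
  refine this.congr_deriv ?_
  simp only [GG, Pi.mul_apply, Pi.pow_apply]
  have hph : ph a ε y₀ y = -2 * (ε : ℂ) * (y - y₀) + 2 * Complex.I * a * y := rfl
  set p := ph a ε y₀ y
  set E1 := Complex.exp (-(ε : ℂ) * (y - y₀) ^ 2)
  set E2 := Complex.exp (Complex.I * a * y ^ 2)
  set F := iteratedDerivWithin k f (Set.Ici b) y
  set F' := iteratedDerivWithin (k + 1) f (Set.Ici b) y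
  have h1 : E1 * E2 * F / p ^ m = E1 * E2 * F * (-2 * (ε : ℂ) * (y - y₀) + 2 * Complex.I * a * y)
      / p ^ (m + 1) := by
    rw [← hph, pow_succ]; field_simp
  rw [h1]
  clear_value p
  push_cast
  field_simp
  ring

theorem GG_step {a b ε y₀ : ℝ} {n : ℕ} {α : ℝ} {f : ℝ → ℂ} (hα : 0 ≤ α) (ha : a ≠ 0) (hb : 0 < b)
    (hε : 0 < ε) (hf : MemCnAlpha b n α f) (m k : ℕ) (hk : k < n) :
    ∫ y in Set.Ioi b, GG a b ε y₀ f m k y =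
      -GG a b ε y₀ f (m + 1) k b - (∫ y in Set.Ioi b, GG a b ε y₀ f (m + 1) (k + 1) y)
      + ((m : ℂ) + 1) * (-2 * (ε : ℂ) + 2 * Complex.I * a) *
        ∫ y in Set.Ioi b, GG a b ε y₀ f (m + 2) k y := by
  have i1 := GG_int (y₀ := y₀) hα ha hb hε hf m k hk.le
  have i2 := GG_int (y₀ := y₀) hα ha hb hε hf (m + 1) (k + 1) hk
  have i3 := (GG_int (y₀ := y₀) hα ha hb hε hf (m + 2) k hk.le).const_mul
    (((m : ℂ) + 1) * (-2 * (ε : ℂ) + 2 * Complex.I * a))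
  have hd := fun y (hy : y ∈ Set.Ioi b) => GG_deriv (ε := ε) (y₀ := y₀) ha hb hf.1 m k hk hy
  have hi := (i1.add i2).sub i3
  have ht := tendsto_zero_of_hasDerivAt_of_integrableOn_Ioi hd hi
    (GG_int (y₀ := y₀) hα ha hb hε hf (m + 1) k hk.le)
  have key := integral_Ioi_of_hasDerivAt_of_tendsto
    (GG_contOn (ε := ε) (y₀ := y₀) ha hb hf.1 (m + 1) k hk.le b Set.self_mem_Ici) hd hi ht
  have e1 := integral_sub (i1.add i2) i3
  have e2 := integral_add i1 i2
  have e3 := integral_const_mul (μ := volume.restrict (Set.Ioi b))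
    (((m : ℂ) + 1) * (-2 * (ε : ℂ) + 2 * Complex.I * a)) (GG a b ε y₀ f (m + 2) k)
  simp only [Pi.add_apply] at e1 e2
  rw [e1, e2, e3] at key
  linear_combination key

/-- admissible constants -/
def Good (r : ℕ) (D : ℝ → ℝ → ℝ) : Prop :=
  (∀ a b : ℝ, a ≠ 0 → 0 < b → 0 ≤ D a b) ∧
  ContinuousOn (fun p : ℝ × ℝ => D p.1 p.2) ({a : ℝ | a ≠ 0} ×ˢ Set.Ioi (0 : ℝ)) ∧
  (∀ b : ℝ, 0 < b →
    Asymptotics.IsBigO (Filter.comap (fun a : ℝ => |a|) Filter.atTop) (fun a : ℝ => D a b)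
      fun a : ℝ => 1 / |a| ^ r)

theorem ev1 : ∀ᶠ a : ℝ in Filter.comap (fun a : ℝ => |a|) Filter.atTop, 1 ≤ |a| :=
  tendsto_comap.eventually_ge_atTop 1

theorem Good.add {r : ℕ} {D E : ℝ → ℝ → ℝ} (hD : Good r D) (hE : Good r E) :
    Good r (fun a b => D a b + E a b) :=
  ⟨fun a b ha hb => add_nonneg (hD.1 a b ha hb) (hE.1 a b ha hb), hD.2.1.add hE.2.1,
    fun b hb => (hD.2.2 b hb).add (hE.2.2 b hb)⟩

theorem Good.mulc {r : ℕ} {D : ℝ → ℝ → ℝ} (hD : Good (r + 1) D) {c : ℝ} (hc : 0 ≤ c) :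
    Good r (fun a b => c * (1 + |a|) * D a b) := by
  refine ⟨fun a b ha hb => mul_nonneg (by positivity) (hD.1 a b ha hb),
    ContinuousOn.mul (by fun_prop) hD.2.1, fun b hb => ?_⟩
  have h1 : Asymptotics.IsBigO (Filter.comap (fun a : ℝ => |a|) Filter.atTop)
      (fun a : ℝ => c * (1 + |a|)) (fun a => |a|) := by
    refine Asymptotics.IsBigO.of_bound (c * 2) ?_
    filter_upwards [ev1] with a ha
    rw [Real.norm_of_nonneg (by positivity), Real.norm_of_nonneg (by positivity)]
    nlinarith
  refine (h1.mul (hD.2.2 b hb)).trans (Asymptotics.IsBigO.of_bound 1 ?_)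
  filter_upwards [ev1] with a ha
  have : |a| ≠ 0 := by positivity
  refine le_of_eq ?_
  rw [one_mul]; congr 1
  field_simp
  ring

theorem Good.base (r : ℕ) {C : ℝ} (hC : 0 ≤ C) (p : ℝ) :
    Good r (fun a b => C / (2 * |a|) ^ r * b ^ p) := by
  refine ⟨fun a b ha hb => by positivity, ?_, fun b hb => ?_⟩
  · refine ContinuousOn.mul (ContinuousOn.div (by fun_prop) (by fun_prop) ?_) ?_
    · rintro ⟨a, b⟩ ⟨ha, _⟩
      have : a ≠ 0 := ha
      simp only
      positivity
    · refine ContinuousOn.rpow_const (by fun_prop) ?_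
      rintro ⟨a, b⟩ ⟨_, hb⟩
      exact Or.inl (ne_of_gt hb)
  · refine Asymptotics.IsBigO.of_bound (C / 2 ^ r * b ^ p) ?_
    filter_upwards [ev1] with a ha
    rw [Real.norm_of_nonneg (by positivity), Real.norm_of_nonneg (by positivity), mul_pow]
    have : |a| ≠ 0 := by positivity
    refine le_of_eq ?_
    field_simp

theorem Good.weaken {r : ℕ} {D : ℝ → ℝ → ℝ} (hD : Good (r + 1) D) : Good r D := by
  refine ⟨hD.1, hD.2.1, fun b hb => (hD.2.2 b hb).trans (Asymptotics.IsBigO.of_bound 1 ?_)⟩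
  filter_upwards [ev1] with a ha
  rw [Real.norm_of_nonneg (by positivity), Real.norm_of_nonneg (by positivity), one_mul]
  exact one_div_le_one_div_of_le (by positivity) (pow_le_pow_right₀ ha (by omega))

def PP (n : ℕ) (α : ℝ) (r m k : ℕ) : Prop :=
  ∃ D : ℝ → ℝ → ℝ, Good r D ∧ ∀ a b : ℝ, a ≠ 0 → 0 < b → ∀ f : ℝ → ℂ, MemCnAlpha b n α f →
    (∃ L : ℂ, ∀ y₀ : ℝ,
      Tendsto (fun ε : ℝ => ∫ y in Set.Ioi b, GG a b ε y₀ f m k y) (𝓝[>] 0) (𝓝 L)) ∧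
    ∀ ε y₀ : ℝ, 0 < ε → ε ≤ 1 →
      ‖∫ y in Set.Ioi b, GG a b ε y₀ f m k y‖ ≤ D a b * CnAlphaNorm b n α f

theorem GG_tend {a b : ℝ} {f : ℝ → ℂ} (ha : a ≠ 0) (m k : ℕ) (y₀ y : ℝ)
    (hy : 0 < y) :
    Tendsto (fun ε : ℝ => GG a b ε y₀ f m k y) (𝓝[>] 0) (𝓝 (GG a b 0 0 f m k y)) := by
  have h0 : GG a b 0 0 f m k y = GG a b 0 y₀ f m k y := by simp [GG, ph]
  rw [h0]
  have : ContinuousAt (fun ε : ℝ => GG a b ε y₀ f m k y) 0 := by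
    unfold GG
    refine ContinuousAt.div (by fun_prop) (by unfold ph; fun_prop) ?_
    exact pow_ne_zero _ (ph_ne ha hy)
  exact this.tendsto.mono_left nhdsWithin_le_nhds

theorem PP_base {n : ℕ} {α : ℝ} (hα : 0 ≤ α) (hn : α + 1 < n) {m k : ℕ} (hk : k ≤ n)
    (hmk : 2 * n ≤ m + k) : PP n α m m k := by
  obtain ⟨j, hkj⟩ := Nat.exists_eq_add_of_le hk
  have hp : (j : ℝ) + α - m < -1 := by
    have : n + j ≤ m := by omega
    have : (n : ℝ) + j ≤ m := by exact_mod_cast this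
    linarith
  set p := (j : ℝ) + α - m with hpdef
  refine ⟨fun a b => (((j : ℝ) + 1) / (-(p + 1))) / (2 * |a|) ^ m * b ^ (p + 1),
    Good.base m (div_nonneg (by positivity) (by linarith)) (p + 1), ?_⟩
  intro a b ha hb f hf
  have hI : IntegrableOn (fun y : ℝ =>
      ((j : ℝ) + 1) / (2 * |a|) ^ m * CnAlphaNorm b n α f * y ^ p) (Set.Ioi b) :=
    (integrableOn_Ioi_rpow_of_lt hp hb).const_mul _
  have hbd : ∀ ε y₀ : ℝ, 0 < ε → ∀ᵐ y ∂(volume.restrict (Set.Ioi b)),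
      ‖GG a b ε y₀ f m k y‖ ≤ ((j : ℝ) + 1) / (2 * |a|) ^ m * CnAlphaNorm b n α f * y ^ p := by
    intro ε y₀ hε
    refine (ae_restrict_iff' measurableSet_Ioi).2 (Eventually.of_forall fun y hy => ?_)
    exact GG_bound0 hα ha hb hε.le hf m k j hkj.symm (le_of_lt hy)
  refine ⟨⟨∫ y in Set.Ioi b, GG a b 0 0 f m k y, fun y₀ => ?_⟩, fun ε y₀ hε _ => ?_⟩
  · refine tendsto_integral_filter_of_dominated_convergence _
      (Eventually.of_forall fun ε => GG_meas ha hb hf.1 m k hk) ?_ hI ?_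
    · filter_upwards [self_mem_nhdsWithin] with ε hε using hbd ε y₀ hε
    · refine (ae_restrict_iff' measurableSet_Ioi).2 (Eventually.of_forall fun y hy => ?_)
      exact GG_tend ha m k y₀ y (hb.trans hy)
  · refine (norm_integral_le_of_norm_le hI (hbd ε y₀ hε)).trans (le_of_eq ?_)
    rw [integral_const_mul, integral_Ioi_rpow_of_lt hp hb]
    have h1 : p + 1 ≠ 0 := by linarith
    have : |a| ≠ 0 := by positivity
    clear_value p
    field_simp

theorem PP_step {n : ℕ} {α : ℝ} (hα : 0 ≤ α) {m k : ℕ} (hk : k < n)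
    (h1 : PP n α (m + 1) (m + 1) (k + 1)) (h2 : PP n α (m + 2) (m + 2) k) :
    PP n α (m + 1) m k := by
  obtain ⟨D1, g1, H1⟩ := h1
  obtain ⟨D2, g2, H2⟩ := h2
  obtain ⟨j, hkj⟩ := Nat.exists_eq_add_of_le hk.le
  refine ⟨_, ((Good.base (m + 1) (by positivity : (0:ℝ) ≤ (j : ℝ) + 1)
    ((j : ℝ) + α - (m + 1 : ℕ))).add g1).add
    (g2.mulc (by positivity : (0:ℝ) ≤ 2 * ((m : ℝ) + 1))), ?_⟩
  intro a b ha hb f hf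
  obtain ⟨⟨L1, T1⟩, B1⟩ := H1 a b ha hb f hf
  obtain ⟨⟨L2, T2⟩, B2⟩ := H2 a b ha hb f hf
  refine ⟨⟨-GG a b 0 0 f (m + 1) k b - L1 +
    ((m : ℂ) + 1) * (-2 * ((0 : ℝ) : ℂ) + 2 * Complex.I * a) * L2, fun y₀ => ?_⟩,
    fun ε y₀ hε hε1 => ?_⟩
  · have hc : Tendsto (fun ε : ℝ => ((m : ℂ) + 1) * (-2 * (ε : ℂ) + 2 * Complex.I * a)) (𝓝[>] 0)
        (𝓝 (((m : ℂ) + 1) * (-2 * ((0 : ℝ) : ℂ) + 2 * Complex.I * a))) := by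
      have : Continuous (fun ε : ℝ => ((m : ℂ) + 1) * (-2 * (ε : ℂ) + 2 * Complex.I * a)) := by
        fun_prop
      exact (this.tendsto 0).mono_left nhdsWithin_le_nhds
    have := (((GG_tend (b := b) (f := f) ha (m + 1) k y₀ b hb).neg).sub (T1 y₀)).add
      (hc.mul (T2 y₀))
    refine this.congr' ?_
    filter_upwards [self_mem_nhdsWithin] with ε hε
    exact (GG_step hα ha hb hε hf m k hk).symm
  · rw [GG_step hα ha hb hε hf m k hk]
    have b0 := GG_bound0 (y₀ := y₀) hα ha hb hε.le hf (m + 1) k j hkj.symm le_rfl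
    have b1 := B1 ε y₀ hε hε1
    have b2 := B2 ε y₀ hε hε1
    have hc : ‖((m : ℂ) + 1) * (-2 * (ε : ℂ) + 2 * Complex.I * a)‖ ≤
        2 * ((m : ℝ) + 1) * (1 + |a|) := by
      rw [norm_mul]
      have e1 : ‖(m : ℂ) + 1‖ = (m : ℝ) + 1 := by
        have := Complex.norm_natCast (m + 1)
        push_cast at this
        exact this
      have e2 : ‖-2 * (ε : ℂ) + 2 * Complex.I * a‖ ≤ 2 * ε + 2 * |a| := by
        refine (norm_add_le _ _).trans (le_of_eq ?_)
        simp [abs_of_pos hε]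
      rw [e1]
      have : (0:ℝ) ≤ (m : ℝ) + 1 := by positivity
      calc _ ≤ ((m : ℝ) + 1) * (2 * ε + 2 * |a|) := by gcongr
        _ ≤ ((m : ℝ) + 1) * (2 * 1 + 2 * |a|) := by gcongr
        _ = _ := by ring
    have hm := mul_le_mul hc b2 (norm_nonneg _) (by positivity)
    rw [← norm_mul] at hm
    refine (norm_add_le _ _).trans ?_
    refine (add_le_add_left (norm_sub_le _ _) _).trans ?_
    rw [norm_neg]
    nlinarith

theorem PP_all {n : ℕ} {α : ℝ} (hα : 0 ≤ α) (hn : α + 1 < n) (s : ℕ) : ∀ m k : ℕ, k ≤ m → k ≤ n →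
    2 * n ≤ m + k + s → PP n α m m k := by
  induction s with
  | zero => intro m k _ hk h; exact PP_base hα hn hk (by omega)
  | succ s ih =>
    intro m k hkm hk h
    rcases Nat.lt_or_ge (m + k) (2 * n) with h' | h'
    · obtain ⟨D, g, H⟩ := PP_step hα (by omega)
        (ih (m + 1) (k + 1) (by omega) (by omega) (by omega))
        (ih (m + 2) k (by omega) (by omega) (by omega))
      exact ⟨D, g.weaken, H⟩
    · exact PP_base hα hn hk h'

open Asymptotics in
/-- for `n > α + 1`, the oscillatory integral `I_{a,b}(f)` exists as the limit
`ε → 0⁺` of the regularized integrals, independently of `y₀`, and there is a constant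
`D_{a,b,n,α} ≥ 0`, continuous in `(a,b)` and `O(1/|a|)` as `|a| → ∞`, bounding both the
regularized integrals (for `0 < ε ≤ 1`) and the oscillatory integral by
`D_{a,b,n,α}·‖f‖_{C_α^n([b,∞))}`. -/
theorem stmt12 (n : ℕ) (α : ℝ) (hα : 0 ≤ α) (hn : α + 1 < n) :
    ∃ D : ℝ → ℝ → ℝ,
      (∀ a b : ℝ, a ≠ 0 → 0 < b → 0 ≤ D a b) ∧
      ContinuousOn (fun p : ℝ × ℝ => D p.1 p.2) ({a : ℝ | a ≠ 0} ×ˢ Set.Ioi (0 : ℝ)) ∧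
      (∀ b : ℝ, 0 < b →
        (fun a : ℝ => D a b) =O[Filter.comap (fun a : ℝ => |a|) Filter.atTop]
          fun a : ℝ => 1 / |a|) ∧
      ∀ a b : ℝ, a ≠ 0 → 0 < b → ∀ f : ℝ → ℂ, MemCnAlpha b n α f →
        (∃ L : ℂ,
          (∀ y₀ : ℝ, Tendsto (fun ε : ℝ => Iab a b ε y₀ f) (𝓝[>] 0) (𝓝 L)) ∧
          ‖L‖ ≤ D a b * CnAlphaNorm b n α f) ∧
        ∀ ε y₀ : ℝ, 0 < ε → ε ≤ 1 → ‖Iab a b ε y₀ f‖ ≤ D a b * CnAlphaNorm b n α f := by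
  have hn0 : 0 < n := by
    have : (0 : ℝ) < n := by linarith
    exact_mod_cast this
  obtain ⟨D, ⟨g1, g2, g3⟩, H⟩ := PP_step (m := 0) (k := 0) hα hn0
    (PP_all hα hn (2 * n) 1 1 le_rfl (by omega) (by omega))
    (PP_all hα hn (2 * n) 2 0 (by omega) (by omega) (by omega))
  refine ⟨D, g1, g2, fun b hb => by simpa using g3 b hb, ?_⟩
  intro a b ha hb f hf
  have hG : ∀ ε y₀ : ℝ, ∫ y in Set.Ioi b, GG a b ε y₀ f 0 0 y = Iab a b ε y₀ f := by
    intro ε y₀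
    simp [GG, Iab, iteratedDerivWithin_zero]
  obtain ⟨⟨L, T⟩, B⟩ := H a b ha hb f hf
  simp only [hG] at T B
  refine ⟨⟨L, T, ?_⟩, B⟩
  refine le_of_tendsto (T 0).norm ?_
  filter_upwards [Ioc_mem_nhdsGT (zero_lt_one (α := ℝ))] with ε hε
  exact B ε 0 hε.1 hε.2
end
end

section
/- Let a∈ℝ\{0}, b>0, n∈ℕ, α≥0 with n>α+1, and assume f∈C_α^n([b,∞)) satisfies the asymptotic condition f^{(k)}(y) = o(y^{k+1}) as y→∞ for every k∈{0,…,n−1}. Then the oscillatory integral I_{a,b}(f) equals the improper Riemann integral: I_{a,b}(f) = lim_{R→∞} ∫_b^R e^{iay²} f(y) dy. -/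
open Set Filter MeasureTheory Topology

noncomputable section

lemma abel_int (b : ℝ) (hb : 0 < b) (g : ℝ → ℂ) (hg : Continuous g)
    (hO : g =O[atTop] fun y : ℝ => y) (ε : ℝ) (hε : 0 < ε) :
    IntegrableOn (fun y : ℝ => Complex.exp (-(ε : ℂ) * y ^ 2) * g y) (Ioi b) := by
  have hc : Continuous (fun y : ℝ => Complex.exp (-(ε : ℂ) * y ^ 2) * g y) := by fun_prop
  have := (hc.locallyIntegrable (μ := volume)).locallyIntegrableOn (Ici b)
  refine (this.integrableOn_of_isBigO_atTop (g := fun y : ℝ => y * Real.exp (-ε * y ^ 2)) ?_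
    ((integrable_mul_exp_neg_mul_sq hε).integrableAtFilter _)).mono_set Ioi_subset_Ici_self
  have h1 : (fun y : ℝ => Complex.exp (-(ε : ℂ) * y ^ 2)) =O[atTop]
      fun y : ℝ => Real.exp (-ε * y ^ 2) := by
    refine Asymptotics.isBigO_of_le _ fun y => ?_
    rw [show (-(ε : ℂ) * y ^ 2) = ((-ε * y ^ 2 : ℝ) : ℂ) by push_cast; ring, ← Complex.ofReal_exp,
      Complex.norm_real]
  refine (h1.mul hO).congr_right fun y => mul_comm _ _

lemma abel_cont (b : ℝ) (hb : 0 < b) (g : ℝ → ℂ) (hg : Continuous g)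
    (hO : g =O[atTop] fun y : ℝ => y) (L : ℂ)
    (hL : Tendsto (fun R : ℝ => ∫ y in b..R, g y) atTop (𝓝 L)) :
    Tendsto (fun ε : ℝ => ∫ y in Ioi b, Complex.exp (-(ε : ℂ) * y ^ 2) * g y)
      (𝓝[>] 0) (𝓝 L) := by
  set v : ℝ → ℂ := fun y => (∫ t in b..y, g t) - L with hv
  have hvd : ∀ x, HasDerivAt v (g x) x := fun x =>
    (intervalIntegral.integral_hasDerivAt_right (hg.intervalIntegrable _ _)
      (hg.stronglyMeasurableAtFilter _ _) hg.continuousAt).sub_const L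
  have hvc : Continuous v := continuous_iff_continuousAt.2 fun x => (hvd x).continuousAt
  have hv0 : Tendsto v atTop (𝓝 0) := by
    simpa using hL.sub_const L
  have hvb : v b = -L := by simp [hv]
  -- bound
  have hbd : ∀ δ > 0, ∃ C ≥ 0, ∀ y ≥ b, ‖v y‖ ≤ δ + C * (1 / y ^ 3) := by
    intro δ hδ
    obtain ⟨Y, hY⟩ := eventually_atTop.1 ((Metric.tendsto_nhds.1 hv0) δ hδ)
    obtain ⟨K, hK⟩ := (isCompact_Icc (a := b) (b := max Y b)).exists_bound_of_continuousOn
      hvc.continuousOn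
    have hK0 : 0 ≤ K := (norm_nonneg _).trans (hK b ⟨le_rfl, le_max_right _ _⟩)
    have hm : 0 < max Y b := hb.trans_le (le_max_right _ _)
    refine ⟨K * (max Y b) ^ 3, by positivity, fun y hy => ?_⟩
    have hy0 : 0 < y := hb.trans_le hy
    by_cases h : y ≤ max Y b
    · have h1 : ‖v y‖ ≤ K := hK y ⟨hy, h⟩
      have h2 : K ≤ K * (max Y b) ^ 3 * (1 / y ^ 3) := by
        rw [mul_one_div, le_div_iff₀ (by positivity)]
        gcongr
      linarith
    · have h1 := hY y ((le_max_left Y b).trans (not_le.1 h).le)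
      rw [dist_zero_right] at h1
      have : 0 ≤ K * (max Y b) ^ 3 * (1 / y ^ 3) := by positivity
      linarith
  have hint3 : IntegrableOn (fun y : ℝ => 1 / y ^ 2) (Ioi b) := by
    refine (integrableOn_Ioi_rpow_of_lt (a := -2) (by norm_num) hb).congr_fun (fun y hy => ?_)
      measurableSet_Ioi
    have : 0 < y := hb.trans hy
    simp only
    rw [Real.rpow_neg this.le, one_div]; norm_num
  have hgi : ∀ ε > (0:ℝ), IntegrableOn (fun y : ℝ => 2 * ε * (y * Real.exp (-ε * y ^ 2))) (Ioi b) :=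
    fun ε hε => ((integrable_mul_exp_neg_mul_sq hε).integrableOn).const_mul _
  have hgv : ∀ ε > (0:ℝ), ∫ y in Ioi b, 2 * ε * (y * Real.exp (-ε * y ^ 2)) ≤ 1 := by
    intro ε hε
    have := integral_Ioi_of_hasDerivAt_of_tendsto' (a := b)
      (f := fun y : ℝ => - Real.exp (-ε * y ^ 2)) (m := 0) (fun x _ => by
        have := (((hasDerivAt_pow 2 x).const_mul (-ε)).exp).neg
        convert! this using 1
        simp; ring) (hgi ε hε) (by
        rw [← neg_zero]
        refine (Real.tendsto_exp_atBot.comp ?_).neg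
        exact (tendsto_pow_atTop two_ne_zero).const_mul_atTop_of_neg (by linarith))
    rw [this]
    have : Real.exp (-ε * b ^ 2) ≤ 1 := Real.exp_le_one_iff.2 (by nlinarith [sq_nonneg b])
    linarith
  -- pointwise estimate
  have hpt : ∀ δ > 0, ∃ C ≥ 0, ∀ ε > (0:ℝ), ∀ y ∈ Ioi b,
      ‖(Complex.exp (-(ε : ℂ) * y ^ 2) * (-(ε : ℂ) * (2 * y))) * v y‖ ≤
        δ * (2 * ε * (y * Real.exp (-ε * y ^ 2))) + ε * C * (1 / y ^ 2) := by
    intro δ hδ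
    obtain ⟨C, hC, h⟩ := hbd δ hδ
    refine ⟨2 * C, by positivity, fun ε hε y hy => ?_⟩
    have hy0 : 0 < y := hb.trans hy
    have hn : ‖(Complex.exp (-(ε : ℂ) * y ^ 2) * (-(ε : ℂ) * (2 * y)))‖ =
        2 * ε * (y * Real.exp (-ε * y ^ 2)) := by
      rw [show (-(ε : ℂ) * y ^ 2) = ((-ε * y ^ 2 : ℝ) : ℂ) by push_cast; ring,
        ← Complex.ofReal_exp, norm_mul, Complex.norm_real, norm_mul, norm_neg, Complex.norm_real,
        norm_mul, Complex.norm_real]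
      simp [abs_of_pos hε, abs_of_pos hy0]
      ring
    rw [norm_mul, hn]
    have h1 := h y (le_of_lt hy)
    have he : Real.exp (-ε * y ^ 2) ≤ 1 := Real.exp_le_one_iff.2 (by nlinarith [sq_nonneg y])
    calc 2 * ε * (y * Real.exp (-ε * y ^ 2)) * ‖v y‖
        ≤ 2 * ε * (y * Real.exp (-ε * y ^ 2)) * (δ + C * (1 / y ^ 3)) := by gcongr
      _ = δ * (2 * ε * (y * Real.exp (-ε * y ^ 2))) +
          2 * ε * (y * Real.exp (-ε * y ^ 2)) * (C * (1 / y ^ 3)) := by ring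
      _ ≤ δ * (2 * ε * (y * Real.exp (-ε * y ^ 2))) +
          2 * ε * (y * 1) * (C * (1 / y ^ 3)) := by gcongr
      _ = _ := by field_simp
  have hcu : ∀ ε : ℝ, Continuous fun y : ℝ => (Complex.exp (-(ε : ℂ) * y ^ 2) * (-(ε : ℂ) * (2 * y))) * v y := by
    intro ε; fun_prop
  have hI2 : ∀ ε > (0:ℝ), IntegrableOn (fun y : ℝ =>
      (Complex.exp (-(ε : ℂ) * y ^ 2) * (-(ε : ℂ) * (2 * y))) * v y) (Ioi b) := by
    intro ε hε
    obtain ⟨C, hC, h⟩ := hpt 1 one_pos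
    refine Integrable.mono' (((hgi ε hε).const_mul 1).add (hint3.const_mul (ε * C)))
      (hcu ε).aestronglyMeasurable ?_
    exact (ae_restrict_mem measurableSet_Ioi).mono fun y hy => h ε hε y hy
  have hparts : ∀ ε > (0:ℝ), ∫ y in Ioi b, Complex.exp (-(ε : ℂ) * y ^ 2) * g y =
      Complex.exp (-(ε : ℂ) * b ^ 2) * L -
      ∫ y in Ioi b, (Complex.exp (-(ε : ℂ) * y ^ 2) * (-(ε : ℂ) * (2 * y))) * v y := by
    intro ε hε
    have := integral_Ioi_mul_deriv_eq_deriv_mul (a := b)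
      (u := fun y : ℝ => Complex.exp (-(ε : ℂ) * y ^ 2)) (v := v) (v' := g)
      (u' := fun y : ℝ => Complex.exp (-(ε : ℂ) * y ^ 2) * (-(ε : ℂ) * (2 * y)))
      (a' := Complex.exp (-(ε : ℂ) * b ^ 2) * v b) (b' := 0)
      (fun x _ => by
        have h := ((((hasDerivAt_id x).ofReal_comp).pow 2).const_mul (-(ε : ℂ))).cexp
        convert! h using 1
        simp) (fun x _ => hvd x)
      (abel_int b hb g hg hO ε hε) (hI2 ε hε) ?_ ?_
    · rw [this, hvb]; ring
    · have hc : Continuous ((fun y : ℝ => Complex.exp (-(ε : ℂ) * y ^ 2)) * v) := by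
        apply Continuous.mul _ hvc; fun_prop
      exact (hc.tendsto b).mono_left nhdsWithin_le_nhds
    · refine squeeze_zero_norm (fun y => ?_) (tendsto_zero_iff_norm_tendsto_zero.1 hv0)
      rw [Pi.mul_apply, norm_mul]
      refine mul_le_of_le_one_left (norm_nonneg _) ?_
      rw [show (-(ε : ℂ) * y ^ 2) = ((-ε * y ^ 2 : ℝ) : ℂ) by push_cast; ring,
        ← Complex.ofReal_exp, Complex.norm_real, Real.norm_eq_abs, Real.abs_exp]
      exact Real.exp_le_one_iff.2 (by nlinarith [sq_nonneg y])
  have hrem : Tendsto (fun ε : ℝ => ∫ y in Ioi b,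
      (Complex.exp (-(ε : ℂ) * y ^ 2) * (-(ε : ℂ) * (2 * y))) * v y) (𝓝[>] 0) (𝓝 0) := by
    rw [Metric.tendsto_nhds]
    intro δ hδ
    obtain ⟨C, hC, h⟩ := hpt (δ / 2) (by linarith)
    set J := ∫ y in Ioi b, 1 / y ^ 2
    have hlim : Tendsto (fun ε : ℝ => ε * C * J) (𝓝[>] 0) (𝓝 0) := by
      have : Continuous fun ε : ℝ => ε * C * J := by fun_prop
      simpa using (this.tendsto 0).mono_left nhdsWithin_le_nhds
    filter_upwards [hlim.eventually (gt_mem_nhds (show (0:ℝ) < δ / 2 by linarith)),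
      self_mem_nhdsWithin] with ε h1 hε
    have hε : 0 < ε := hε
    rw [dist_zero_right]
    have := norm_integral_le_of_norm_le (((hgi ε hε).const_mul (δ/2)).add (hint3.const_mul (ε * C)))
      ((ae_restrict_mem measurableSet_Ioi).mono fun y hy => h ε hε y hy)
    simp only [Pi.add_apply] at this
    rw [integral_add ((hgi ε hε).const_mul (δ/2)) (hint3.const_mul (ε * C)),
      integral_const_mul (δ / 2), integral_const_mul (ε * C)] at this
    have h2 := mul_le_mul_of_nonneg_left (hgv ε hε) (show 0 ≤ δ / 2 by linarith)
    linarith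
  have hfin : Tendsto (fun ε : ℝ => Complex.exp (-(ε : ℂ) * b ^ 2) * L) (𝓝[>] 0) (𝓝 L) := by
    have : Continuous fun ε : ℝ => Complex.exp (-(ε : ℂ) * b ^ 2) * L := by fun_prop
    simpa using (this.tendsto 0).mono_left nhdsWithin_le_nhds
  have := hfin.sub hrem
  rw [sub_zero] at this
  refine this.congr' ?_
  filter_upwards [self_mem_nhdsWithin] with ε hε using (hparts ε hε).symm


lemma improper_conv (a : ℝ) (ha : a ≠ 0) (b : ℝ) (hb : 0 < b) (n : ℕ) (α : ℝ)
    (hn : α + 1 < n) (h : ℕ → ℝ → ℂ) (hc : ∀ k ≤ n, ContinuousOn (h k) (Ici b))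
    (hd : ∀ k < n, ∀ y ∈ Ioi b, HasDerivAt (h k) (h (k + 1) y) y)
    (M : ℝ) (hM : ∀ y ∈ Ici b, ‖h n y‖ ≤ M * y ^ α)
    (hlo : ∀ k < n, h k =o[atTop] fun y : ℝ => y ^ (k + 1)) :
    ∀ k ≤ n, ∀ m ≥ k, ∃ L : ℂ, Tendsto (fun R : ℝ => ∫ y in b..R,
      Complex.exp (Complex.I * a * y ^ 2) * h k y / (y : ℂ) ^ m) atTop (𝓝 L) := by
  have hne : ∀ y ∈ Ici b, (y : ℂ) ≠ 0 := fun y hy => by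
    have : 0 < y := hb.trans_le hy
    exact_mod_cast this.ne'
  have hTc : ∀ k ≤ n, ∀ m, ContinuousOn (fun y : ℝ =>
      Complex.exp (Complex.I * a * y ^ 2) * h k y / (y : ℂ) ^ m) (Ici b) := by
    intro k hk m
    refine ContinuousOn.div (ContinuousOn.mul (by fun_prop) (hc k hk)) (by fun_prop) ?_
    exact fun y hy => pow_ne_zero _ (hne y hy)
  have hnorm : ∀ k m, ∀ y ∈ Ici b, ‖Complex.exp (Complex.I * a * y ^ 2) * h k y / (y : ℂ) ^ m‖ =
      ‖h k y‖ / y ^ m := by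
    intro k m y hy
    have : 0 < y := hb.trans_le hy
    rw [norm_div, norm_mul, show Complex.I * a * y ^ 2 = ((a * y ^ 2 : ℝ) : ℂ) * Complex.I by
      push_cast; ring, Complex.norm_exp_ofReal_mul_I, one_mul, norm_pow, Complex.norm_real,
      Real.norm_eq_abs, abs_of_pos this]
  have habs : ∀ k ≤ n, ∀ m, ∀ s : ℝ, s < -1 →
      (fun y : ℝ => ‖h k y‖ / y ^ m) =O[atTop] (fun y : ℝ => y ^ s) →
      ∃ L : ℂ, Tendsto (fun R : ℝ => ∫ y in b..R,
      Complex.exp (Complex.I * a * y ^ 2) * h k y / (y : ℂ) ^ m) atTop (𝓝 L) := by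
    intro k hk m s hs hO
    have h1 := (hTc k hk m).locallyIntegrableOn (μ := volume) measurableSet_Ici
    have h2 := h1.integrableOn_of_isBigO_atTop (g := fun y : ℝ => y ^ s) (by
      refine Asymptotics.IsBigO.trans (Asymptotics.IsBigO.of_bound' ?_) hO
      filter_upwards [eventually_ge_atTop b] with y hy
      rw [hnorm k m y hy]; exact le_abs_self _)
      ⟨Ioi b, Ioi_mem_atTop b, integrableOn_Ioi_rpow_of_lt hs hb⟩
    exact ⟨_, intervalIntegral_tendsto_integral_Ioi b (h2.mono_set Ioi_subset_Ici_self) tendsto_id⟩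
  have hstep : ∀ k < n, ∀ m ≥ k,
      (∃ L : ℂ, Tendsto (fun R : ℝ => ∫ y in b..R,
        Complex.exp (Complex.I * a * y ^ 2) * h (k+1) y / (y : ℂ) ^ (m+1)) atTop (𝓝 L)) →
      (∃ L : ℂ, Tendsto (fun R : ℝ => ∫ y in b..R,
        Complex.exp (Complex.I * a * y ^ 2) * h k y / (y : ℂ) ^ (m+2)) atTop (𝓝 L)) →
      (∃ L : ℂ, Tendsto (fun R : ℝ => ∫ y in b..R,
        Complex.exp (Complex.I * a * y ^ 2) * h k y / (y : ℂ) ^ m) atTop (𝓝 L)) := by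
    rintro k hk m hm ⟨L1, h1⟩ ⟨L2, h2⟩
    set u : ℝ → ℂ := fun y : ℝ => Complex.exp (Complex.I * a * y ^ 2) * h k y / (y : ℂ) ^ (m+1)
      with hu
    have hu0 : Tendsto u atTop (𝓝 0) := by
      rw [tendsto_zero_iff_norm_tendsto_zero]
      have h3 : Tendsto (fun y : ℝ => ‖h k y‖ / y ^ (k+1)) atTop (𝓝 0) :=
        (hlo k hk).norm_left.tendsto_div_nhds_zero
      refine squeeze_zero' (Eventually.of_forall fun y => norm_nonneg _) ?_ h3
      filter_upwards [eventually_ge_atTop b, eventually_ge_atTop 1] with y hy hy1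
      rw [hu]; simp only
      rw [hnorm k (m+1) y hy]
      gcongr
    have hc0 : Complex.I * a ≠ 0 := mul_ne_zero Complex.I_ne_zero (by exact_mod_cast ha)
    have key : ∀ R ≥ b, ∫ y in b..R,
        Complex.exp (Complex.I * a * y ^ 2) * h k y / (y : ℂ) ^ m =
        (u R - u b - (∫ y in b..R,
        Complex.exp (Complex.I * a * y ^ 2) * h (k+1) y / (y : ℂ) ^ (m+1)) +
        (m+1) * ∫ y in b..R,
        Complex.exp (Complex.I * a * y ^ 2) * h k y / (y : ℂ) ^ (m+2)) / (2 * (Complex.I * a)) := by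
      intro R hR
      have hii : ∀ k ≤ n, ∀ m, IntervalIntegrable (fun y : ℝ =>
        Complex.exp (Complex.I * a * y ^ 2) * h k y / (y : ℂ) ^ m) volume b R := by
        intro k hk m
        refine ((hTc k hk m).mono ?_).intervalIntegrable
        rw [uIcc_of_le hR]; exact Icc_subset_Ici_self
      have i1 := (hii k hk.le m).const_mul (2 * (Complex.I * a))
      have i2 := hii (k+1) hk (m+1)
      have i3 := (hii k hk.le (m+2)).const_mul ((m:ℂ)+1)
      have := intervalIntegral.integral_eq_sub_of_hasDerivAt_of_le hR
        ((hTc k hk.le (m+1)).mono Icc_subset_Ici_self) (fun x hx => ?_) ((i1.add i2).sub i3)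
      · rw [intervalIntegral.integral_sub (i1.add i2) i3, intervalIntegral.integral_add i1 i2,
          intervalIntegral.integral_const_mul, intervalIntegral.integral_const_mul] at this
        rw [eq_div_iff (mul_ne_zero two_ne_zero hc0)]
        linear_combination this
      · have hx0 := hne x (le_of_lt hx.1)
        have e1 := ((((hasDerivAt_id x).ofReal_comp).pow 2).const_mul (Complex.I * a)).cexp
        have e2 := ((hasDerivAt_id x).ofReal_comp).pow (m+1)
        have e3 := (e1.mul (hd k hk x hx.1)).div e2 (pow_ne_zero _ hx0)
        convert! e3 using 1
        simp
        field_simp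
        ring
    refine ⟨_, Tendsto.congr' ?_ ((((hu0.sub_const (u b)).sub h1).add
      (h2.const_mul ((m:ℂ)+1))).div_const (2 * (Complex.I * a)))⟩
    filter_upwards [eventually_ge_atTop b] with R hR using (key R hR).symm
  suffices H : ∀ j ≤ n, ∀ m ≥ n - j, ∃ L : ℂ, Tendsto (fun R : ℝ => ∫ y in b..R,
      Complex.exp (Complex.I * a * y ^ 2) * h (n - j) y / (y : ℂ) ^ m) atTop (𝓝 L) by
    intro k hk m hm
    have := H (n - k) (by omega) m (by omega)
    rwa [show n - (n - k) = k by omega] at this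
  intro j
  induction j with
  | zero =>
    intro _ m hm
    refine habs n le_rfl m (α - n) (by linarith) ?_
    refine Asymptotics.IsBigO.of_bound M ?_
    filter_upwards [eventually_ge_atTop b, eventually_ge_atTop 1] with y hy hy1
    have hy0 : 0 < y := by linarith
    have h1 := hM y hy
    rw [Real.norm_of_nonneg (by positivity), Real.norm_of_nonneg (by positivity),
      Real.rpow_sub hy0, Real.rpow_natCast, ← mul_div_assoc]
    have : 0 ≤ M * y ^ α := (norm_nonneg _).trans h1
    simp at hm
    gcongr
  | succ j ih =>
    intro hj m hm
    set k := n - (j+1) with hk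
    have hkn : k < n := by omega
    have hkj : n - j = k + 1 := by omega
    rw [hkj] at ih
    have ih := ih (by omega)
    have hbig : ∀ m ≥ k + 3, ∃ L : ℂ, Tendsto (fun R : ℝ => ∫ y in b..R,
      Complex.exp (Complex.I * a * y ^ 2) * h k y / (y : ℂ) ^ m) atTop (𝓝 L) := by
      intro m hm
      refine habs k hkn.le m (-2) (by norm_num) ?_
      obtain ⟨c, hc⟩ := (hlo k hkn).isBigO.bound
      refine Asymptotics.IsBigO.of_bound c ?_
      filter_upwards [eventually_ge_atTop b, eventually_ge_atTop 1, hc] with y hy hy1 h1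
      have hy0 : 0 < y := by linarith
      rw [Real.norm_of_nonneg (by positivity)] at h1
      rw [Real.norm_of_nonneg (by positivity), Real.norm_of_nonneg (by positivity),
        Real.rpow_neg hy0.le]
      have h0 : 0 ≤ c * y ^ (k+1) := (norm_nonneg _).trans h1
      calc ‖h k y‖ / y ^ m ≤ (c * y ^ (k+1)) / y ^ (k + 3) := by
            gcongr
        _ = _ := by
            norm_num
            field_simp
            ring
    have h2 : ∀ m ≥ k + 1, ∃ L : ℂ, Tendsto (fun R : ℝ => ∫ y in b..R,
      Complex.exp (Complex.I * a * y ^ 2) * h k y / (y : ℂ) ^ m) atTop (𝓝 L) := fun m hm =>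
      hstep k hkn m (by omega) (ih (m+1) (by omega)) (hbig (m+2) (by omega))
    exact hstep k hkn m hm (ih (m+1) (by omega)) (h2 (m+2) (by omega))

/-- if `f ∈ C_α^n([b,∞))` with `n > α + 1` satisfies
`f^{(k)}(y) = o(y^{k+1})` as `y → ∞` for all `k ∈ {0,…,n-1}`, then the oscillatory integral
(the limit `ε → 0⁺` of the Gaussian-regularized integrals) coincides with the improper
Riemann integral `lim_{R→∞} ∫_b^R e^{iay²} f(y) dy`. -/
theorem stmt13 (a : ℝ) (ha : a ≠ 0) (b : ℝ) (hb : 0 < b) (n : ℕ) (α : ℝ) (hα : 0 ≤ α)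
    (hn : α + 1 < n) (f : ℝ → ℂ) (hf : MemCnAlpha b n α f)
    (hlo : ∀ k < n, (fun y : ℝ => iteratedDerivWithin k f (Set.Ici b) y)
      =o[Filter.atTop] fun y : ℝ => y ^ (k + 1))
    (L : ℂ)
    (hL : Filter.Tendsto
      (fun ε : ℝ => ∫ y in Set.Ioi b,
        Complex.exp (-(ε : ℂ) * y ^ 2) * Complex.exp (Complex.I * a * y ^ 2) * f y)
      (𝓝[>] 0) (𝓝 L)) :
    Filter.Tendsto (fun R : ℝ => ∫ y in b..R, Complex.exp (Complex.I * a * y ^ 2) * f y)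
      Filter.atTop (𝓝 L) := by
  obtain ⟨hfc, M, hM0, hM⟩ := hf
  have hcd : ∀ k ≤ n, ContinuousOn (iteratedDerivWithin k f (Ici b)) (Ici b) := fun k hk =>
    hfc.continuousOn_iteratedDerivWithin (by exact_mod_cast hk) (uniqueDiffOn_Ici b)
  have hd : ∀ k < n, ∀ y ∈ Ioi b, HasDerivAt (iteratedDerivWithin k f (Ici b))
      (iteratedDerivWithin (k + 1) f (Ici b) y) y := by
    intro k hk y hy
    rw [iteratedDerivWithin_succ]
    exact (hfc.differentiableOn_iteratedDerivWithin (by exact_mod_cast hk) (uniqueDiffOn_Ici b) y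
      (mem_Ici.2 (le_of_lt (mem_Ioi.1 hy)))).hasDerivWithinAt.hasDerivAt (Ici_mem_nhds hy)
  obtain ⟨L', hL'⟩ := improper_conv a ha b hb n α hn (fun k => iteratedDerivWithin k f (Ici b))
    hcd hd M hM hlo 0 (Nat.zero_le _) 0 le_rfl
  simp only [iteratedDerivWithin_zero, pow_zero, div_one] at hL'
  have hn0 : 0 < n := by
    have : (0:ℝ) < n := by linarith
    exact_mod_cast this
  have hf0 := hlo 0 hn0
  simp only [iteratedDerivWithin_zero, zero_add, pow_one] at hf0
  have hcf : Continuous fun y : ℝ => f (max b y) :=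
    hfc.continuousOn.comp_continuous (by fun_prop) (fun y => le_max_left b y)
  have hA := abel_cont b hb (fun y : ℝ => Complex.exp (Complex.I * a * y ^ 2) * f (max b y))
    (Continuous.mul (by fun_prop) hcf) ?_ L' ?_
  · have : L = L' := by
      refine tendsto_nhds_unique hL (hA.congr fun ε => ?_)
      refine setIntegral_congr_fun measurableSet_Ioi fun y hy => ?_
      rw [max_eq_right (le_of_lt hy)]; ring
    rw [this]; exact hL'
  · refine Asymptotics.IsBigO.trans (Asymptotics.IsBigO.of_bound' ?_) hf0.isBigO
    filter_upwards [eventually_ge_atTop b] with y hy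
    rw [max_eq_right hy, norm_mul, show Complex.I * a * y ^ 2 = ((a * y ^ 2 : ℝ) : ℂ) * Complex.I by
      push_cast; ring, Complex.norm_exp_ofReal_mul_I, one_mul]
  · refine hL'.congr' ?_
    filter_upwards [eventually_ge_atTop b] with R hR
    refine intervalIntegral.integral_congr fun y hy => ?_
    rw [uIcc_of_le hR] at hy
    rw [max_eq_right hy.1]
end
end
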